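/- Let n be a positive integer, z > 0, and let Y be an ℝ^n-valued random vector whose coordinates are mutually independent Gaussian random variables, each with variance z. Let ε > z, set μ = (ε/z − 1)/4 and β = min{μ, μ²}. Then P(‖Y − E[Y]‖²/n ≥ ε) = 1 − F_{χ²_n}(nε/z) ≤ exp(−β·n), where F_{χ²_n} is the cumulative distribution function of the chi-squared distribution with n degrees of freedom. -/

import Mathlib

/-!
The standardized sum of squares `T = ∑ i, (Y i - μ i) ^ 2 / z` has moment generating function
`(1 - 2 t) ^ (-n / 2)` for `t < 1 / 2`, by independence and the Gaussian integral. The Gamma law of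
shape `n / 2` and rate `1 / 2` has the same one, by Euler's integral, and in both cases the
exponential moments of order `t ≥ 1 / 2` diverge. As these transforms are finite near `0`, they
extend analytically to a strip around the imaginary axis, so the characteristic functions agree and
`T` is chi-squared distributed (`map_sum_sq_pi_gaussianReal`). The chi-squared law has no atoms,
which turns `P (T ≥ c)` into `1 - F c`.

The tail estimate (`chiSqMeasure_real_Ici_le`) is Chernoff's bound
`P (T ≥ n x) ≤ (√x * exp ((1 - x) / 2)) ^ n` with `x = ε / z = 1 + 4 u`, combined with the
elementary inequality `1 + 4 u ≤ exp (4 u - 2 * min u (u ^ 2))`.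
-/

open Matrix MeasureTheory ProbabilityTheory Real

/-- The singular values of a real matrix `X` (indexed by the row type),
defined as the square roots of the eigenvalues of `X * Xᵀ`. -/
noncomputable def sVals {m n : Type*} [Fintype m] [DecidableEq m] [Fintype n]
    (X : Matrix m n ℝ) (i : m) : ℝ :=
  Real.sqrt ((Matrix.isHermitian_mul_conjTranspose_self X).eigenvalues i)

/-- The largest singular value of `X`. -/
noncomputable def sMax {m n : Type*} [Fintype m] [DecidableEq m] [Fintype n]
    (X : Matrix m n ℝ) : ℝ :=
  sSup (Set.range (sVals X))

/-- The smallest singular value of `X`. -/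
noncomputable def sMin {m n : Type*} [Fintype m] [DecidableEq m] [Fintype n]
    (X : Matrix m n ℝ) : ℝ :=
  sInf (Set.range (sVals X))

/-- The condition number of `X`: the ratio of its largest to smallest singular value. -/
noncomputable def condNum {m n : Type*} [Fintype m] [DecidableEq m] [Fintype n]
    (X : Matrix m n ℝ) : ℝ :=
  sMax X / sMin X

/-- The singular values of a matrix with rows indexed by `Fin s`, arranged in
nonincreasing order: `svdSorted X 0` is the largest, `svdSorted X (s-1)` the smallest. -/
noncomputable def svdSorted {s : ℕ} {n : Type*} [Fintype n]
    (X : Matrix (Fin s) n ℝ) (i : Fin s) : ℝ :=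
  sVals X (Tuple.sort (sVals X) i.rev)

/-- The multiset of singular values of `X` (with multiplicities). -/
noncomputable def svMultiset {m n : Type*} [Fintype m] [DecidableEq m] [Fintype n]
    (X : Matrix m n ℝ) : Multiset ℝ :=
  Finset.univ.val.map (sVals X)

/-- Horizontal block concatenation `(C 0 | C 1 | … | C (M-1))` of `M` matrices
with the same number of rows. -/
def blockRow {s d : Type*} (M : ℕ) (C : Fin M → Matrix s d ℝ) :
    Matrix s (Fin M × d) ℝ :=
  Matrix.of fun i p => C p.1 i p.2

/-- The `s × d` matrix with ones on the main diagonal and zeros elsewhere. -/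
def Isd (s d : ℕ) : Matrix (Fin s) (Fin d) ℝ :=
  Matrix.of fun i j => if (i : ℕ) = (j : ℕ) then (1 : ℝ) else 0

/-- The chi-squared distribution with `n` degrees of freedom, i.e. the Gamma
distribution with shape `n/2` and rate `1/2`. -/
noncomputable def chiSqMeasure (n : ℕ) : Measure ℝ :=
  gammaMeasure ((n : ℝ) / 2) (1 / 2)

/-- The Laplace transform of the standardized square of a Gaussian variable. For `t ≥ 1 / 2` the
integrand is not integrable, and both sides are the junk value `0`. -/
lemma integral_exp_sq_gaussianReal (m : ℝ) {z : ℝ} (hz : 0 < z) (t : ℝ) :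
    ∫ y, rexp (t * ((y - m) ^ 2 / z)) ∂(gaussianReal m z.toNNReal) = √(1 / (1 - 2 * t)) := by
  have hz' : z.toNNReal ≠ 0 := by simpa using hz
  rw [integral_gaussianReal_eq_integral_smul hz']
  have h1 : ∀ y : ℝ, gaussianPDFReal m z.toNNReal y • rexp (t * ((y - m) ^ 2 / z))
      = (√(2 * π * z))⁻¹ * rexp (-((1 / 2 - t) / z) * (y - m) ^ 2) := by
    intro y
    rw [gaussianPDFReal_def, Real.coe_toNNReal z hz.le]
    simp only [smul_eq_mul]
    rw [mul_assoc, ← Real.exp_add]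
    congr 2
    field_simp
    ring
  simp_rw [h1]
  rw [integral_const_mul,
    integral_sub_right_eq_self (fun y : ℝ => rexp (-((1 / 2 - t) / z) * y ^ 2)) m,
    integral_gaussian, ← Real.sqrt_inv, ← Real.sqrt_mul (by positivity)]
  congr 1
  rw [show 1 - 2 * t = 2 * (1 / 2 - t) by ring]
  rcases eq_or_ne (1 / 2 - t) 0 with h | h
  · rw [h]; simp
  · field_simp

lemma mgf_sum_sq_pi_gaussianReal {n : ℕ} (μ : Fin n → ℝ) {z : ℝ} (hz : 0 < z) (t : ℝ) :
    mgf (fun y : Fin n → ℝ => (∑ i, (y i - μ i) ^ 2) / z)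
      (Measure.pi fun i => gaussianReal (μ i) z.toNNReal) t = √(1 / (1 - 2 * t)) ^ n := by
  have h1 : ∀ y : Fin n → ℝ, rexp (t * ((∑ i, (y i - μ i) ^ 2) / z))
      = ∏ i, rexp (t * ((y i - μ i) ^ 2 / z)) := by
    intro y
    rw [← Real.exp_sum, Finset.sum_div, Finset.mul_sum]
  simp only [mgf, h1]
  rw [integral_fintype_prod_eq_prod (fun i (x : ℝ) => rexp (t * ((x - μ i) ^ 2 / z)))]
  simp [integral_exp_sq_gaussianReal _ hz]

lemma isProbabilityMeasure_chiSqMeasure {n : ℕ} (hn : 0 < n) :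
    IsProbabilityMeasure (chiSqMeasure n) :=
  isProbabilityMeasure_gammaMeasure (by positivity) (by norm_num)

/-- Away from the null set `(-∞, 0]`, the exponential weight only shifts the rate of the
Gamma density. -/
lemma integral_exp_gammaMeasure {a r : ℝ} (ha : 0 < a) (hr : 0 < r) (t : ℝ) :
    ∫ x, rexp (t * x) ∂(gammaMeasure a r)
      = r ^ a / Gamma a * ∫ x in Set.Ioi 0, x ^ (a - 1) * rexp (-((r - t) * x)) := by
  have hm : Measurable (gammaPDF a r) := (measurable_gammaPDFReal a r).ennreal_ofReal
  rw [gammaMeasure, integral_withDensity_eq_integral_toReal_smul hm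
    (ae_of_all _ fun _ => ENNReal.ofReal_lt_top), ← integral_const_mul,
    ← integral_Ici_eq_integral_Ioi, ← integral_indicator measurableSet_Ici]
  congr 1
  ext x
  rw [gammaPDF, ENNReal.toReal_ofReal (gammaPDFReal_nonneg ha hr x)]
  by_cases hx : 0 ≤ x
  · rw [Set.indicator_of_mem (Set.mem_Ici.2 hx), gammaPDFReal, if_pos hx, smul_eq_mul, mul_assoc,
      mul_assoc, ← Real.exp_add]
    congr 3
    ring_nf
  · rw [Set.indicator_of_notMem (by simpa using hx), gammaPDFReal, if_neg hx, zero_smul]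

/-- On `(1, ∞)` the integrand dominates `x⁻¹`. -/
lemma not_integrableOn_rpow_mul_exp {a s : ℝ} (ha : 0 < a) (hs : s ≤ 0) :
    ¬ IntegrableOn (fun x : ℝ => x ^ (a - 1) * rexp (-(s * x))) (Set.Ioi 0) := by
  intro h
  have h1 := h.mono_set (Set.Ioi_subset_Ioi (zero_le_one (α := ℝ)))
  have h2 : IntegrableOn (fun x : ℝ => x ^ (-1 : ℝ)) (Set.Ioi 1) := by
    refine Integrable.mono' h1 (by fun_prop) ?_
    refine (ae_restrict_iff' measurableSet_Ioi).2 (ae_of_all _ fun x hx => ?_)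
    have hx1 : (1 : ℝ) < x := hx
    have hx0 : (0 : ℝ) ≤ x := by linarith
    rw [Real.norm_of_nonneg (by positivity)]
    calc x ^ (-1 : ℝ) ≤ x ^ (a - 1) := Real.rpow_le_rpow_of_exponent_le hx1.le (by linarith)
      _ ≤ x ^ (a - 1) * rexp (-(s * x)) :=
        le_mul_of_one_le_right (by positivity) (Real.one_le_exp (by nlinarith))
  rw [integrableOn_Ioi_rpow_iff one_pos] at h2
  exact lt_irrefl _ h2

/-- For `t ≥ 1 / 2` both sides are the junk value `0`; the formula for every real `t` is what
allows identifying the law by its moment generating function. -/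
lemma mgf_chiSqMeasure {n : ℕ} (hn : 0 < n) (t : ℝ) :
    mgf id (chiSqMeasure n) t = √(1 / (1 - 2 * t)) ^ n := by
  have ha : (0 : ℝ) < (n : ℝ) / 2 := by positivity
  simp only [mgf, id, chiSqMeasure]
  rw [integral_exp_gammaMeasure ha (by norm_num)]
  rcases lt_or_ge t (1 / 2) with ht | ht
  · have hs : 0 < 1 / 2 - t := by linarith
    have hG : Real.Gamma ((n : ℝ) / 2) ≠ 0 := (Real.Gamma_pos_of_pos ha).ne'
    have h1 : (0 : ℝ) ≤ 1 / (1 - 2 * t) := by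
      apply div_nonneg zero_le_one; linarith
    rw [Real.integral_rpow_mul_exp_neg_mul_Ioi ha hs, Real.sqrt_eq_rpow, ← Real.rpow_natCast,
      ← Real.rpow_mul h1, show (1 / 2 : ℝ) * (n : ℝ) = n / 2 by ring,
      show 1 / (1 - 2 * t) = (1 / 2) * (1 / (1 / 2 - t)) by
        rw [show 1 - 2 * t = 2 * (1 / 2 - t) by ring]; field_simp,
      Real.mul_rpow (by norm_num) (by positivity)]
    field_simp
  · rw [integral_undef (not_integrableOn_rpow_mul_exp ha (by linarith)), mul_zero,
      Real.sqrt_eq_zero_of_nonpos, zero_pow hn.ne']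
    exact div_nonpos_of_nonneg_of_nonpos zero_le_one (by linarith)

lemma integrable_exp_chiSqMeasure {n : ℕ} (hn : 0 < n) {t : ℝ} (ht : t < 1 / 2) :
    Integrable (fun x => rexp (t * id x)) (chiSqMeasure n) := by
  by_contra h
  -- a non-integrable function has integral `0`, but the moment generating function is positive
  have h1 := mgf_chiSqMeasure hn t
  rw [mgf, integral_undef h] at h1
  have : 0 < √(1 / (1 - 2 * t)) ^ n := by
    have : 0 < 1 - 2 * t := by linarith
    positivity
  exact this.ne h1

/-- The standardized sum of squares of independent Gaussian variables of variance `z` has the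
chi-squared law. -/
lemma map_sum_sq_pi_gaussianReal {n : ℕ} (hn : 0 < n) (μ : Fin n → ℝ) {z : ℝ} (hz : 0 < z) :
    (Measure.pi fun i => gaussianReal (μ i) z.toNNReal).map
      (fun y : Fin n → ℝ => (∑ i, (y i - μ i) ^ 2) / z) = chiSqMeasure n := by
  have := isProbabilityMeasure_chiSqMeasure hn
  set P := Measure.pi fun i => gaussianReal (μ i) z.toNNReal
  set T : (Fin n → ℝ) → ℝ := fun y => (∑ i, (y i - μ i) ^ 2) / z with hT
  have hTm : Measurable T := by fun_prop
  have hmgf : mgf id (chiSqMeasure n) = mgf T P := by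
    ext t
    rw [mgf_chiSqMeasure hn, mgf_sum_sq_pi_gaussianReal μ hz]
  have h0 : (0 : ℝ) ∈ interior (integrableExpSet id (chiSqMeasure n)) := by
    refine mem_interior.2 ⟨Set.Iio (1 / 2), fun t ht => integrable_exp_chiSqMeasure hn ht,
      isOpen_Iio, by simp⟩
  have : IsProbabilityMeasure (P.map T) := Measure.isProbabilityMeasure_map hTm.aemeasurable
  refine Measure.ext_of_charFun ?_
  ext t
  rw [← complexMGF_id_mul_I, ← complexMGF_id_mul_I, complexMGF_id_map hTm.aemeasurable]
  exact (eqOn_complexMGF_of_mgf hmgf (by simpa using h0)).symm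

/-- The exponent comparison behind the tail bound, with `u = (ε / z - 1) / 4`. It follows from
`1 + w + w ^ 2 / 2 ≤ exp w` with `w` the right-hand exponent, which is at least `2 u` in both
regimes `u ≤ 1` and `u ≥ 1`. -/
lemma one_add_le_exp_sub_min {u : ℝ} (hu : 0 < u) :
    1 + 4 * u ≤ rexp (4 * u - 2 * min u (u ^ 2)) := by
  rcases le_total u 1 with h | h
  · rw [min_eq_right (by nlinarith)]
    have := Real.quadratic_le_exp_of_nonneg (x := 4 * u - 2 * u ^ 2) (by nlinarith)
    have h2 : (2 * u) ^ 2 ≤ (4 * u - 2 * u ^ 2) ^ 2 :=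
      pow_le_pow_left₀ (by positivity) (by nlinarith) 2
    linarith
  · rw [min_eq_left (by nlinarith)]
    have := Real.quadratic_le_exp_of_nonneg (x := 4 * u - 2 * u) (by linarith)
    nlinarith

/-- Chernoff's bound at the optimal parameter `t = (1 - 1 / x) / 2`, where `x = 1 + 4 u`. -/
lemma chiSqMeasure_real_Ici_le {n : ℕ} (hn : 0 < n) {u : ℝ} (hu : 0 < u) :
    (chiSqMeasure n).real (Set.Ici (n * (1 + 4 * u))) ≤ rexp (-(min u (u ^ 2)) * n) := by
  have := isProbabilityMeasure_chiSqMeasure hn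
  set t : ℝ := 2 * u / (1 + 4 * u) with ht
  have hx : 0 < 1 + 4 * u := by linarith
  have ht0 : 0 ≤ t := by positivity
  have ht1 : t < 1 / 2 := by
    rw [ht, div_lt_iff₀ hx]; linarith
  have hmain := measure_ge_le_exp_mul_mgf (X := id) (μ := chiSqMeasure n)
    ((n : ℝ) * (1 + 4 * u)) ht0 (integrable_exp_chiSqMeasure hn ht1)
  have h12 : 1 / (1 - 2 * t) = 1 + 4 * u := by
    rw [ht]; field_simp; ring
  have hexp : -t * (n * (1 + 4 * u)) = n * (-(2 * u)) := by
    rw [ht]; field_simp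
  rw [mgf_chiSqMeasure hn, h12, hexp, Real.exp_nat_mul, ← mul_pow] at hmain
  refine hmain.trans ?_
  rw [mul_comm (-(min u (u ^ 2))), Real.exp_nat_mul]
  refine pow_le_pow_left₀ (by positivity) ?_ n
  have hs : √(1 + 4 * u) ≤ rexp (2 * u - min u (u ^ 2)) := by
    rw [Real.sqrt_le_left (by positivity), ← Real.exp_nat_mul]
    convert one_add_le_exp_sub_min hu using 2
    push_cast; ring
  calc rexp (-(2 * u)) * √(1 + 4 * u)
      ≤ rexp (-(2 * u)) * rexp (2 * u - min u (u ^ 2)) := by gcongr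
    _ = rexp (-(min u (u ^ 2))) := by rw [← Real.exp_add]; congr 1; ring

/-- For `Y` as in Statement 10 and `ε > z`, with `μ' = (ε/z − 1)/4` and
`β = min{μ', μ'²}`, one has
`P(‖Y − E[Y]‖²/n ≥ ε) = 1 − F_{χ²_n}(nε/z) ≤ exp(−β·n)`. -/
theorem prob_normSq_ge_eq_one_sub_cdf_le_exp {n : ℕ} (hn : 0 < n) {z : ℝ} (hz : 0 < z)
    {Ω : Type*} [MeasureSpace Ω] [IsProbabilityMeasure (ℙ : Measure Ω)]
    (Y : Ω → Fin n → ℝ) (hYmeas : Measurable Y) (μ : Fin n → ℝ)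
    (hYlaw : Measure.map Y ℙ = Measure.pi fun i => gaussianReal (μ i) z.toNNReal)
    {ε : ℝ} (hε : z < ε) :
    (ℙ {ω | ε ≤ (∑ i, (Y ω i - μ i) ^ 2) / n}).toReal
        = 1 - cdf (chiSqMeasure n) ((n : ℝ) * ε / z) ∧
    (ℙ {ω | ε ≤ (∑ i, (Y ω i - μ i) ^ 2) / n}).toReal
        ≤ Real.exp (-(min ((ε / z - 1) / 4) (((ε / z - 1) / 4) ^ 2)) * n) := by
  have hn' : (0 : ℝ) < n := by exact_mod_cast hn
  have hprob := isProbabilityMeasure_chiSqMeasure hn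
  set T : (Fin n → ℝ) → ℝ := fun y => (∑ i, (y i - μ i) ^ 2) / z with hT
  have hTm : Measurable T := by fun_prop
  have hset : {ω | ε ≤ (∑ i, (Y ω i - μ i) ^ 2) / n}
      = (T ∘ Y) ⁻¹' Set.Ici ((n : ℝ) * ε / z) := by
    ext ω
    simp only [Set.mem_ofPred_eq, Set.mem_preimage, Set.mem_Ici, Function.comp, hT]
    rw [le_div_iff₀ hn', div_le_div_iff_of_pos_right hz, mul_comm]
  have hlaw : (ℙ {ω | ε ≤ (∑ i, (Y ω i - μ i) ^ 2) / n}).toReal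
      = (chiSqMeasure n).real (Set.Ici ((n : ℝ) * ε / z)) := by
    rw [hset, ← Measure.map_apply (hTm.comp hYmeas) measurableSet_Ici,
      ← Measure.map_map hTm hYmeas, hYlaw, map_sum_sq_pi_gaussianReal hn μ hz, measureReal_def]
  rw [hlaw]
  constructor
  · have hatom : (chiSqMeasure n).real (Set.Ici ((n : ℝ) * ε / z))
        = (chiSqMeasure n).real (Set.Ioi ((n : ℝ) * ε / z)) :=
      measureReal_congr
        ((withDensity_absolutelyContinuous _ _).ae_le Ioi_ae_eq_Ici.symm)
    rw [hatom, ← Set.compl_Iic, probReal_compl_eq_one_sub measurableSet_Iic, cdf_eq_real]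
  · have hu : 0 < (ε / z - 1) / 4 := by
      have : 1 < ε / z := (one_lt_div hz).2 hε
      linarith
    convert chiSqMeasure_real_Ici_le hn hu using 3
    field_simp
    ring
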